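/- arXiv:2006.13572 — 4 statements merged into one kernel-verified Lean document; each statement's English description precedes it below -/
import Mathlib

section
/- Let ψ₁,…,ψ_M : ℝ → ℝ be continuous functions that are linearly independent on [0,2π], let h₀ > 0, and let W_e, W_u, W_{Δu} : ℝ → ℝ be continuous nonnegative weight functions such that h₀²W_e(α) + W_u(α) + W_{Δu}(α) > 0 for all α ∈ [0,2π]. Fix θ_j, θ_j^e ∈ ℝ^M and define the cost 𝒥(θ) = ∫₀^{2π} [ W_e(α)(ψ(α)ᵀθ_j^e − h₀ ψ(α)ᵀ(θ − θ_j))² + W_u(α)(ψ(α)ᵀθ)² + W_{Δu}(α)(ψ(α)ᵀ(θ − θ_j))² ] dα, where ψ(α) = (ψ₁(α),…,ψ_M(α))ᵀ. Then 𝒥 has a unique global minimizer over ℝ^M, given by θ_{j+1} = Q_ψ θ_j + L_ψ θ_j^e, where M_ψ = G(h₀²W_e + W_u + W_{Δu}), Q_ψ = M_ψ⁻¹ G(h₀²W_e + W_{Δu}), and L_ψ = M_ψ⁻¹ G(h₀ W_e). -/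
open Matrix Finset intervalIntegral

/-- The weighted Gram matrix of the basis functions `ψ` with weight `w`:
`(gram M ψ w) k l = ∫₀^{2π} w(α) ψ_k(α) ψ_l(α) dα`. -/
noncomputable def gram (M : ℕ) (ψ : Fin M → ℝ → ℝ) (w : ℝ → ℝ) :
    Matrix (Fin M) (Fin M) ℝ :=
  Matrix.of fun k l => ∫ α in (0:ℝ)..(2 * Real.pi), w α * ψ k α * ψ l α

lemma gram_bilin (M : ℕ) (ψ : Fin M → ℝ → ℝ) (hcont : ∀ k, Continuous (ψ k))
    (w : ℝ → ℝ) (hw : Continuous w) (x y : Fin M → ℝ) :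
    x ⬝ᵥ (gram M ψ w *ᵥ y) = ∫ α in (0:ℝ)..(2 * Real.pi),
      w α * (∑ k, ψ k α * x k) * (∑ k, ψ k α * y k) := by
  have h : ∀ α, w α * (∑ k, ψ k α * x k) * (∑ k, ψ k α * y k)
      = ∑ k, ∑ l, x k * (w α * ψ k α * ψ l α * y l) := by
    intro α
    rw [mul_assoc, Finset.sum_mul_sum, Finset.mul_sum]
    refine Finset.sum_congr rfl fun k _ => ?_
    rw [Finset.mul_sum]
    refine Finset.sum_congr rfl fun l _ => ?_
    ring
  simp_rw [h]
  rw [intervalIntegral.integral_finsetSum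
    (fun k _ => Continuous.intervalIntegrable (by fun_prop) _ _)]
  refine Finset.sum_congr rfl fun k _ => ?_
  rw [intervalIntegral.integral_finsetSum
    (fun l _ => Continuous.intervalIntegrable (by fun_prop) _ _)]
  simp only [Matrix.mulVec, dotProduct, _root_.gram, Matrix.of_apply]
  rw [Finset.mul_sum]
  refine Finset.sum_congr rfl fun l _ => ?_
  rw [intervalIntegral.integral_const_mul, intervalIntegral.integral_mul_const]

lemma gram_pos (M : ℕ) (ψ : Fin M → ℝ → ℝ) (hcont : ∀ k, Continuous (ψ k))
    (hli : ∀ x : Fin M → ℝ,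
      (∀ α ∈ Set.Icc (0:ℝ) (2 * Real.pi), ∑ k, x k * ψ k α = 0) → x = 0)
    (w : ℝ → ℝ) (hw : Continuous w)
    (hpos : ∀ α ∈ Set.Icc (0:ℝ) (2 * Real.pi), 0 < w α)
    (x : Fin M → ℝ) (hx : x ≠ 0) : 0 < x ⬝ᵥ (gram M ψ w *ᵥ x) := by
  rw [gram_bilin M ψ hcont w hw]
  have hex : ∃ α ∈ Set.Icc (0:ℝ) (2 * Real.pi), ∑ k, x k * ψ k α ≠ 0 := by
    by_contra! hc
    exact hx (hli x hc)
  obtain ⟨c, hc, hne⟩ := hex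
  refine intervalIntegral.integral_pos Real.two_pi_pos (by fun_prop) ?_ ⟨c, hc, ?_⟩
  · intro α hα
    rw [mul_assoc]
    exact mul_nonneg (hpos α (Set.Ioc_subset_Icc_self hα)).le (mul_self_nonneg _)
  · rw [mul_assoc]
    refine mul_pos (hpos c hc) (mul_self_pos.2 ?_)
    simpa only [mul_comm] using hne

/-- **Theorem 2 of the paper.** The commutation-angle domain ILC cost has the
unique global minimizer `θ_{j+1} = Q_ψ θ_j + L_ψ θ_j^e`. -/
theorem optimal_ilc_update (M : ℕ) (ψ : Fin M → ℝ → ℝ)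
    (hcont : ∀ k, Continuous (ψ k))
    (hli : ∀ x : Fin M → ℝ,
      (∀ α ∈ Set.Icc (0:ℝ) (2 * Real.pi), ∑ k, x k * ψ k α = 0) → x = 0)
    (h₀ : ℝ) (hh₀ : 0 < h₀)
    (We Wu WΔu : ℝ → ℝ)
    (hWec : Continuous We) (hWuc : Continuous Wu) (hWΔc : Continuous WΔu)
    (hWe : ∀ α, 0 ≤ We α) (hWu : ∀ α, 0 ≤ Wu α) (hWΔ : ∀ α, 0 ≤ WΔu α)
    (hpos : ∀ α ∈ Set.Icc (0:ℝ) (2 * Real.pi),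
      0 < h₀ ^ 2 * We α + Wu α + WΔu α)
    (θj θje : Fin M → ℝ) :
    let J : (Fin M → ℝ) → ℝ := fun θ =>
      ∫ α in (0:ℝ)..(2 * Real.pi),
        (We α * ((∑ k, ψ k α * θje k) - h₀ * ∑ k, ψ k α * (θ k - θj k)) ^ 2
          + Wu α * (∑ k, ψ k α * θ k) ^ 2
          + WΔu α * (∑ k, ψ k α * (θ k - θj k)) ^ 2)
    let Mψ := gram M ψ (fun α => h₀ ^ 2 * We α + Wu α + WΔu α)
    let Qψ := Mψ⁻¹ * gram M ψ (fun α => h₀ ^ 2 * We α + WΔu α)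
    let Lψ := Mψ⁻¹ * gram M ψ (fun α => h₀ * We α)
    let θnext := Qψ *ᵥ θj + Lψ *ᵥ θje
    (∀ θ, J θnext ≤ J θ) ∧ (∀ θ, θ ≠ θnext → J θnext < J θ) := by
  intro J Mψ Qψ Lψ θnext
  have hWc : Continuous (fun α => h₀ ^ 2 * We α + Wu α + WΔu α) := by fun_prop
  have hP : ∀ x : Fin M → ℝ, x ≠ 0 → 0 < x ⬝ᵥ (Mψ *ᵥ x) :=
    gram_pos M ψ hcont hli _ hWc hpos
  have hdet : IsUnit Mψ.det := by
    rw [isUnit_iff_ne_zero]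
    intro h0
    obtain ⟨v, hv, hv0⟩ := Matrix.exists_mulVec_eq_zero_iff.2 h0
    have := hP v hv
    rw [hv0, dotProduct_zero] at this
    exact lt_irrefl _ this
  have hstat : Mψ *ᵥ θnext = gram M ψ (fun α => h₀ ^ 2 * We α + WΔu α) *ᵥ θj
      + gram M ψ (fun α => h₀ * We α) *ᵥ θje := by
    simp only [θnext, Qψ, Lψ, Matrix.mulVec_add, Matrix.mulVec_mulVec,
      Matrix.mul_nonsing_inv_cancel_left _ _ hdet]
  have key : ∀ θ, J θ = J θnext + (θ - θnext) ⬝ᵥ (Mψ *ᵥ (θ - θnext)) := by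
    intro θ
    have h1 : (θ - θnext) ⬝ᵥ (Mψ *ᵥ θnext)
        - (θ - θnext) ⬝ᵥ (gram M ψ (fun α => h₀ ^ 2 * We α + WΔu α) *ᵥ θj)
        - (θ - θnext) ⬝ᵥ (gram M ψ (fun α => h₀ * We α) *ᵥ θje) = 0 := by
      rw [hstat, dotProduct_add]; ring
    have h2 : J θ = J θnext + (θ - θnext) ⬝ᵥ (Mψ *ᵥ (θ - θnext))
        + 2 * ((θ - θnext) ⬝ᵥ (Mψ *ᵥ θnext)
        - (θ - θnext) ⬝ᵥ (gram M ψ (fun α => h₀ ^ 2 * We α + WΔu α) *ᵥ θj)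
        - (θ - θnext) ⬝ᵥ (gram M ψ (fun α => h₀ * We α) *ᵥ θje)) := by
      clear h1 hstat
      clear_value θnext
      simp only [Mψ, J]
      rw [gram_bilin M ψ hcont _ hWc, gram_bilin M ψ hcont _ hWc,
        gram_bilin M ψ hcont _ (by fun_prop), gram_bilin M ψ hcont _ (by fun_prop),
        ← intervalIntegral.integral_sub (Continuous.intervalIntegrable (by fun_prop) _ _)
          (Continuous.intervalIntegrable (by fun_prop) _ _),
        ← intervalIntegral.integral_sub (Continuous.intervalIntegrable (by fun_prop) _ _)
          (Continuous.intervalIntegrable (by fun_prop) _ _),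
        ← intervalIntegral.integral_const_mul,
        ← intervalIntegral.integral_add (Continuous.intervalIntegrable (by fun_prop) _ _)
          (Continuous.intervalIntegrable (by fun_prop) _ _),
        ← intervalIntegral.integral_add (Continuous.intervalIntegrable (by fun_prop) _ _)
          (Continuous.intervalIntegrable (by fun_prop) _ _)]
      refine intervalIntegral.integral_congr fun α _ => ?_
      simp only [Pi.sub_apply, mul_sub, Finset.sum_sub_distrib]
      ring
    rw [h2, h1]; ring
  have hlt : ∀ θ, θ ≠ θnext → J θnext < J θ := by
    intro θ hθ
    have := hP (θ - θnext) (sub_ne_zero.2 hθ)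
    rw [key θ]
    linarith
  refine ⟨fun θ => ?_, hlt⟩
  by_cases h : θ = θnext
  · rw [h]
  · exact (hlt θ h).le
end

section
/- Let N, P ∈ ℝ^{M×M} be symmetric matrices with N positive semidefinite and P positive definite, and set M₀ = N + P and T = M₀⁻¹N. Then for every nonzero x ∈ ℝ^M, (Tx)ᵀ M₀ (Tx) < xᵀ M₀ x; equivalently, xᵀ N M₀⁻¹ N x < xᵀ M₀ x for all x ≠ 0. Hence T is a strict contraction with respect to the norm ‖x‖_{M₀} = √(xᵀ M₀ x). -/
open Matrix

/-- Supporting lemma for Theorem 3 of the paper: with `N` symmetric positive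
semidefinite, `P` symmetric positive definite, `M₀ = N + P` and `T = M₀⁻¹ N`,
the iteration matrix `T` strictly decreases the `M₀`-weighted quadratic form of
every nonzero vector: `(Tx)ᵀ M₀ (Tx) < xᵀ M₀ x`, equivalently
`xᵀ N M₀⁻¹ N x < xᵀ M₀ x`.  Hence `T` is a strict contraction in the norm
`‖x‖_{M₀} = √(xᵀ M₀ x)`. -/
theorem iteration_matrix_strict_contraction (M : ℕ)
    (N P : Matrix (Fin M) (Fin M) ℝ)
    (hNsymm : N.IsSymm) (hPsymm : P.IsSymm)
    (hN : N.PosSemidef) (hP : P.PosDef)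
    (M₀ T : Matrix (Fin M) (Fin M) ℝ)
    (hM₀ : M₀ = N + P) (hT : T = M₀⁻¹ * N) :
    ∀ x : Fin M → ℝ, x ≠ 0 →
      ((T *ᵥ x) ⬝ᵥ (M₀ *ᵥ (T *ᵥ x)) < x ⬝ᵥ (M₀ *ᵥ x) ∧
        x ⬝ᵥ ((N * M₀⁻¹ * N) *ᵥ x) < x ⬝ᵥ (M₀ *ᵥ x)) ∧
      Real.sqrt ((T *ᵥ x) ⬝ᵥ (M₀ *ᵥ (T *ᵥ x))) < Real.sqrt (x ⬝ᵥ (M₀ *ᵥ x)) := by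
  intro x hx
  have hM : M₀.PosDef := by
    rw [hM₀, add_comm]
    exact hP.add_posSemidef hN
  have hdet : IsUnit M₀.det := hM.det_pos.ne'.isUnit
  have hMT : M₀ * T = N := by
    rw [hT, Matrix.mul_nonsing_inv_cancel_left _ _ hdet]
  set y := T *ᵥ x with hy
  have h1 : M₀ *ᵥ y = N *ᵥ x := by
    rw [hy, Matrix.mulVec_mulVec, hMT]
  have hsym : x ⬝ᵥ (N *ᵥ y) = y ⬝ᵥ (N *ᵥ x) := by
    rw [Matrix.dotProduct_mulVec, ← Matrix.mulVec_transpose, hNsymm.eq, dotProduct_comm]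
  have h2 : x ⬝ᵥ ((N * M₀⁻¹ * N) *ᵥ x) = y ⬝ᵥ (N *ᵥ x) := by
    rw [← hsym, hy, Matrix.mulVec_mulVec, hT, Matrix.mul_assoc]
  have h3 : 0 ≤ (x - y) ⬝ᵥ (N *ᵥ (x - y)) := by
    simpa using hN.dotProduct_mulVec_nonneg (x - y)
  have h4 : 0 ≤ y ⬝ᵥ (P *ᵥ y) := by
    simpa using hP.posSemidef.dotProduct_mulVec_nonneg y
  have h5 : 0 < x ⬝ᵥ (P *ᵥ x) := by
    simpa using hP.dotProduct_mulVec_pos hx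
  have h6 : x ⬝ᵥ (M₀ *ᵥ x) = x ⬝ᵥ (N *ᵥ x) + x ⬝ᵥ (P *ᵥ x) := by
    rw [hM₀, Matrix.add_mulVec, dotProduct_add]
  have h7 : y ⬝ᵥ (N *ᵥ x) = y ⬝ᵥ (N *ᵥ y) + y ⬝ᵥ (P *ᵥ y) := by
    rw [← h1, hM₀, Matrix.add_mulVec, dotProduct_add]
  rw [Matrix.mulVec_sub, dotProduct_sub, sub_dotProduct, sub_dotProduct] at h3
  have key : y ⬝ᵥ (N *ᵥ x) < x ⬝ᵥ (M₀ *ᵥ x) := by linarith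
  have h8 : 0 < x ⬝ᵥ (M₀ *ᵥ x) := by
    simpa using hM.dotProduct_mulVec_pos hx
  rw [h1, h2]
  exact ⟨⟨key, key⟩, Real.sqrt_lt_sqrt_iff_of_pos h8 |>.2 key⟩
end

section
/- Let ψ₁,…,ψ_M : ℝ → ℝ be continuous and linearly independent on [0,2π] and h₀ > 0. Suppose the weights are constants W_e, W_u, W_{Δu} ≥ 0 with W_e > 0 or W_u > 0, and set σ = h₀²W_e + W_u + W_{Δu}. Then M_ψ = σ G(1) is invertible, the learning matrices reduce to scalars Q_ψ = ((h₀²W_e + W_{Δu})/σ) I and L_ψ = (h₀ W_e/σ) I, and the iteration θ_{j+1} = Q_ψ θ_j + L_ψ (c − h₀ θ_j) with fixed point θ* satisfies ‖θ_{j+1} − θ*‖₂ = γ ‖θ_j − θ*‖₂ for all j, where γ = W_{Δu}/σ ∈ [0,1). In particular the sequence (θ_j) converges monotonically in the Euclidean 2-norm to θ*. -/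
open Matrix Finset Filter intervalIntegral

theorem gram_const (M : ℕ) (ψ : Fin M → ℝ → ℝ) (a : ℝ) :
    gram M ψ (fun _ => a) = a • gram M ψ (fun _ => 1) := by
  ext k l
  simp only [_root_.gram, Matrix.of_apply, Matrix.smul_apply, smul_eq_mul, one_mul, mul_assoc]
  exact intervalIntegral.integral_const_mul _ _

theorem gram_quad (M : ℕ) (ψ : Fin M → ℝ → ℝ) (hcont : ∀ k, Continuous (ψ k))
    (x : Fin M → ℝ) :
    x ⬝ᵥ (gram M ψ (fun _ => 1) *ᵥ x) =
      ∫ α in (0:ℝ)..(2 * Real.pi), (∑ k, x k * ψ k α) ^ 2 := by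
  have h : ∀ α, (∑ k, x k * ψ k α) ^ 2 = ∑ k, ∑ l, x k * (x l * (1 * ψ k α * ψ l α)) := by
    intro α
    rw [sq, Finset.sum_mul_sum]
    refine Finset.sum_congr rfl fun k _ => Finset.sum_congr rfl fun l _ => by ring
  simp only [h]
  rw [intervalIntegral.integral_finsetSum]
  · simp only [dotProduct, mulVec, _root_.gram, Matrix.of_apply]
    refine Finset.sum_congr rfl fun k _ => ?_
    rw [intervalIntegral.integral_finsetSum, Finset.mul_sum]
    · refine Finset.sum_congr rfl fun l _ => ?_
      rw [intervalIntegral.integral_const_mul, intervalIntegral.integral_const_mul]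
      ring
    · intro l _
      have := hcont k
      have := hcont l
      exact Continuous.intervalIntegrable (by fun_prop) _ _
  · intro k _
    exact Continuous.intervalIntegrable (by fun_prop) _ _

theorem gram_isUnit (M : ℕ) (ψ : Fin M → ℝ → ℝ) (hcont : ∀ k, Continuous (ψ k))
    (hli : ∀ x : Fin M → ℝ,
      (∀ α ∈ Set.Icc (0:ℝ) (2 * Real.pi), ∑ k, x k * ψ k α = 0) → x = 0) :
    IsUnit (gram M ψ (fun _ => 1)) := by
  rw [Matrix.isUnit_iff_isUnit_det, isUnit_iff_ne_zero]
  intro hdet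
  obtain ⟨x, hx, hGx⟩ := Matrix.exists_mulVec_eq_zero_iff.mpr hdet
  apply hx
  apply hli
  intro α hα
  by_contra hne
  have hq := gram_quad M ψ hcont x
  rw [hGx, dotProduct_zero] at hq
  have hpos : 0 < ∫ α in (0:ℝ)..(2 * Real.pi), (∑ k, x k * ψ k α) ^ 2 := by
    apply intervalIntegral.integral_pos (by positivity)
    · exact Continuous.continuousOn (by fun_prop)
    · intro y _
      positivity
    · exact ⟨α, hα, by positivity⟩
  linarith

/-- **Constant-weight case of Theorem 3 of the paper.** With scalar weights the
learning matrices reduce to scalar multiples of the identity, and the iteration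
contracts the Euclidean distance to the fixed point by the exact factor
`γ = W_{Δu}/σ ∈ [0,1)`; in particular the iterates converge monotonically in the
Euclidean 2-norm to `θ*`. -/
theorem ilc_constant_weights (M : ℕ) (ψ : Fin M → ℝ → ℝ)
    (hcont : ∀ k, Continuous (ψ k))
    (hli : ∀ x : Fin M → ℝ,
      (∀ α ∈ Set.Icc (0:ℝ) (2 * Real.pi), ∑ k, x k * ψ k α = 0) → x = 0)
    (h₀ : ℝ) (hh₀ : 0 < h₀)
    (We Wu WΔu : ℝ)
    (hWe : 0 ≤ We) (hWu : 0 ≤ Wu) (hWΔ : 0 ≤ WΔu)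
    (hposw : 0 < We ∨ 0 < Wu)
    (σ : ℝ) (hσ : σ = h₀ ^ 2 * We + Wu + WΔu)
    (Mψ Qψ Lψ : Matrix (Fin M) (Fin M) ℝ)
    (hMψ : Mψ = gram M ψ (fun _ => σ))
    (hQψ : Qψ = Mψ⁻¹ * gram M ψ (fun _ => h₀ ^ 2 * We + WΔu))
    (hLψ : Lψ = Mψ⁻¹ * gram M ψ (fun _ => h₀ * We))
    (c : Fin M → ℝ)
    (γ : ℝ) (hγ : γ = WΔu / σ)
    (θstar : Fin M → ℝ)
    (hfix : θstar = Qψ *ᵥ θstar + Lψ *ᵥ (c - h₀ • θstar))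
    (θ : ℕ → Fin M → ℝ)
    (hθ : ∀ j, θ (j + 1) = Qψ *ᵥ θ j + Lψ *ᵥ (c - h₀ • θ j)) :
    Mψ = σ • gram M ψ (fun _ => 1) ∧ IsUnit Mψ ∧
    Qψ = ((h₀ ^ 2 * We + WΔu) / σ) • (1 : Matrix (Fin M) (Fin M) ℝ) ∧
    Lψ = (h₀ * We / σ) • (1 : Matrix (Fin M) (Fin M) ℝ) ∧
    0 ≤ γ ∧ γ < 1 ∧
    (∀ j : ℕ,
      Real.sqrt (∑ k, (θ (j + 1) k - θstar k) ^ 2) =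
        γ * Real.sqrt (∑ k, (θ j k - θstar k) ^ 2)) ∧
    Tendsto θ atTop (nhds θstar) := by
  have hpos : 0 < h₀ ^ 2 * We + Wu := by
    rcases hposw with h | h <;> positivity
  have hσpos : 0 < σ := by rw [hσ]; linarith
  have hG := gram_isUnit M ψ hcont hli
  have hM : Mψ = σ • gram M ψ (fun _ => 1) := by rw [hMψ, gram_const]
  have hGdet := (Matrix.isUnit_iff_isUnit_det _).mp hG
  have hdetM : IsUnit Mψ.det := by
    rw [hM, Matrix.det_smul]
    exact ((isUnit_iff_ne_zero.mpr hσpos.ne').pow _).mul hGdet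
  have key : ∀ a : ℝ, Mψ⁻¹ * gram M ψ (fun _ => a) =
      (a / σ) • (1 : Matrix (Fin M) (Fin M) ℝ) := by
    intro a
    have : gram M ψ (fun _ => a) = Mψ * ((a / σ) • (1 : Matrix (Fin M) (Fin M) ℝ)) := by
      rw [gram_const, hM, Matrix.mul_smul, Matrix.mul_one, smul_smul,
        div_mul_cancel₀ _ hσpos.ne']
    rw [this, Matrix.nonsing_inv_mul_cancel_left _ _ hdetM]
  have hQ := hQψ.trans (key _)
  have hL := hLψ.trans (key _)
  have hγ0 : 0 ≤ γ := by rw [hγ]; positivity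
  have hγ1 : γ < 1 := by rw [hγ, div_lt_one hσpos]; linarith
  have hstep : ∀ j k, θ (j + 1) k - θstar k = γ * (θ j k - θstar k) := by
    intro j k
    have h1 := congrFun (hθ j) k
    have h2 := congrFun hfix k
    simp only [hQ, hL, Matrix.smul_mulVec, Matrix.one_mulVec, Pi.add_apply, Pi.smul_apply,
      Pi.sub_apply, smul_eq_mul] at h1 h2
    calc θ (j + 1) k - θstar k
        = ((h₀ ^ 2 * We + WΔu) / σ * θ j k + h₀ * We / σ * (c k - h₀ * θ j k)) -
          ((h₀ ^ 2 * We + WΔu) / σ * θstar k + h₀ * We / σ * (c k - h₀ * θstar k)) := by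
          rw [← h1, ← h2]
      _ = γ * (θ j k - θstar k) := by
          rw [hγ]
          ring
  have hgeo : ∀ j k, θ j k = θstar k + γ ^ j * (θ 0 k - θstar k) := by
    intro j k
    induction j with
    | zero => simp
    | succ n ih =>
      have := hstep n k
      rw [ih] at this
      rw [pow_succ]
      linarith
  refine ⟨hM, (Matrix.isUnit_iff_isUnit_det _).mpr hdetM, hQ, hL, hγ0, hγ1, ?_, ?_⟩
  · intro j
    simp only [hstep j, mul_pow]
    rw [← Finset.mul_sum, Real.sqrt_mul (sq_nonneg γ), Real.sqrt_sq hγ0]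
  · rw [tendsto_pi_nhds]
    intro k
    rw [show (fun j => θ j k) = fun j => θstar k + γ ^ j * (θ 0 k - θstar k) from
      funext fun j => hgeo j k]
    simpa using ((tendsto_pow_atTop_nhds_zero_of_lt_one hγ0 hγ1).mul_const
      (θ 0 k - θstar k)).const_add (θstar k)
end

section
/- Let ψ₁,…,ψ_M : ℝ → ℝ be continuous and linearly independent on [0,2π], h₀ > 0, W_u ≡ 0, and let W_e, W_{Δu} : ℝ → ℝ be continuous nonnegative weights with W_e(α) > 0 for all α ∈ [0,2π]. Then the unique fixed point of the iteration θ_{j+1} = Q_ψ θ_j + L_ψ (c − h₀ θ_j) is θ* = c/h₀; consequently the limiting error parameter vector θ^{e*} = c − h₀θ* equals 0, i.e., the converged input perfectly compensates the commutation-angle-domain repeating disturbance and the limiting parameterized error e*(α) = ψ(α)ᵀθ^{e*} vanishes for every α. -/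
open Matrix Finset intervalIntegral

theorem gram_mulVec_eq_zero (M : ℕ) (ψ : Fin M → ℝ → ℝ)
    (hcont : ∀ k, Continuous (ψ k))
    (hli : ∀ x : Fin M → ℝ,
      (∀ α ∈ Set.Icc (0:ℝ) (2 * Real.pi), ∑ k, x k * ψ k α = 0) → x = 0)
    (w : ℝ → ℝ) (hw : Continuous w)
    (hpos : ∀ α ∈ Set.Icc (0:ℝ) (2 * Real.pi), 0 < w α)
    (x : Fin M → ℝ) (hx : gram M ψ w *ᵥ x = 0) : x = 0 := by
  have hq : ∫ α in (0:ℝ)..(2 * Real.pi), w α * (∑ k, x k * ψ k α) ^ 2 = 0 := by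
    have h1 : x ⬝ᵥ (gram M ψ w *ᵥ x) = 0 := by rw [hx]; simp
    refine Eq.trans ?_ h1
    have h2 : ∀ α, w α * (∑ k, x k * ψ k α) ^ 2
        = ∑ k, ∑ l, x k * ((w α * ψ k α * ψ l α) * x l) := by
      intro α
      rw [sq, Finset.sum_mul_sum, Finset.mul_sum]
      refine Finset.sum_congr rfl fun k _ => ?_
      rw [Finset.mul_sum]
      refine Finset.sum_congr rfl fun l _ => ?_
      ring
    simp_rw [h2]
    rw [intervalIntegral.integral_finsetSum]
    · simp only [dotProduct, mulVec, _root_.gram, Matrix.of_apply]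
      refine Finset.sum_congr rfl fun k _ => ?_
      rw [intervalIntegral.integral_finsetSum]
      · rw [Finset.mul_sum]
        refine Finset.sum_congr rfl fun l _ => ?_
        rw [intervalIntegral.integral_const_mul, intervalIntegral.integral_mul_const]
      · intro l _
        have := hcont k
        have := hcont l
        exact Continuous.intervalIntegrable (by fun_prop) _ _
    · intro k _
      exact Continuous.intervalIntegrable (by fun_prop) _ _
  apply hli
  by_contra! hne
  obtain ⟨a, ha, hane⟩ := hne
  have : 0 < ∫ α in (0:ℝ)..(2 * Real.pi), w α * (∑ k, x k * ψ k α) ^ 2 := by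
    apply intervalIntegral.integral_pos (by positivity)
    · exact Continuous.continuousOn (by fun_prop)
    · intro b hb
      have := hpos b ⟨hb.1.le, hb.2⟩
      positivity
    · exact ⟨a, ha, mul_pos (hpos a ha) (by positivity)⟩
  exact this.ne' hq

/-- **Perfect compensation by the converged ILC input.** With `W_u ≡ 0` and
`W_e` pointwise positive, the unique fixed point of the ILC iteration is
`θ* = c / h₀`, so the limiting error parameter vector `θ^{e*} = c - h₀ θ*`
vanishes, and with it the limiting parameterized error `e*(α) = ψ(α)ᵀ θ^{e*}`
for every `α`. -/
theorem ilc_perfect_compensation (M : ℕ) (ψ : Fin M → ℝ → ℝ)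
    (hcont : ∀ k, Continuous (ψ k))
    (hli : ∀ x : Fin M → ℝ,
      (∀ α ∈ Set.Icc (0:ℝ) (2 * Real.pi), ∑ k, x k * ψ k α = 0) → x = 0)
    (h₀ : ℝ) (hh₀ : 0 < h₀)
    (We WΔu : ℝ → ℝ)
    (hWec : Continuous We) (hWΔc : Continuous WΔu)
    (hWe : ∀ α, 0 ≤ We α) (hWΔ : ∀ α, 0 ≤ WΔu α)
    (hWepos : ∀ α ∈ Set.Icc (0:ℝ) (2 * Real.pi), 0 < We α)
    (c : Fin M → ℝ) :
    let Mψ := gram M ψ (fun α => h₀ ^ 2 * We α + WΔu α)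
    let Qψ := Mψ⁻¹ * gram M ψ (fun α => h₀ ^ 2 * We α + WΔu α)
    let Lψ := Mψ⁻¹ * gram M ψ (fun α => h₀ * We α)
    (∀ θstar : Fin M → ℝ,
        θstar = Qψ *ᵥ θstar + Lψ *ᵥ (c - h₀ • θstar) ↔ θstar = h₀⁻¹ • c) ∧
    c - h₀ • (h₀⁻¹ • c) = 0 ∧
    ∀ α : ℝ, ∑ k, ψ k α * (c - h₀ • (h₀⁻¹ • c)) k = 0 := by
  intro Mψ Qψ Lψ
  have hz : c - h₀ • (h₀⁻¹ • c) = 0 := by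
    rw [smul_smul, mul_inv_cancel₀ hh₀.ne', one_smul, sub_self]
  have hM : IsUnit Mψ := by
    rw [← Matrix.mulVec_injective_iff_isUnit]
    intro x y hxy
    rw [← sub_eq_zero]
    refine gram_mulVec_eq_zero M ψ hcont hli (fun α => h₀ ^ 2 * We α + WΔu α)
      (by fun_prop) ?_ _ ?_
    · intro α hα
      have h1 := hWepos α hα
      have h2 := hWΔ α
      positivity
    · rw [Matrix.mulVec_sub]
      exact sub_eq_zero.2 hxy
  have hdet : IsUnit Mψ.det := (Matrix.isUnit_iff_isUnit_det _).1 hM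
  have hQ : Qψ = 1 := Matrix.nonsing_inv_mul _ hdet
  refine ⟨fun θ => ?_, hz, fun α => by rw [hz]; simp⟩
  rw [hQ, Matrix.one_mulVec]
  constructor
  · intro h
    have h1 : Lψ *ᵥ (c - h₀ • θ) = 0 := left_eq_add.1 h
    have h2 : gram M ψ (fun α => h₀ * We α) *ᵥ (c - h₀ • θ) = 0 := by
      have h3 := congrArg (fun v => Mψ *ᵥ v) h1
      simpa [Lψ, Matrix.mulVec_mulVec, ← Matrix.mul_assoc,
        Matrix.mul_nonsing_inv _ hdet] using h3
    have h4 := gram_mulVec_eq_zero M ψ hcont hli (fun α => h₀ * We α)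
      (by fun_prop) (fun α hα => mul_pos hh₀ (hWepos α hα)) _ h2
    rw [sub_eq_zero.1 h4, smul_smul, inv_mul_cancel₀ hh₀.ne', one_smul]
  · rintro rfl
    rw [hz, Matrix.mulVec_zero, add_zero]
end
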